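/- Let n ≥ 2 and let G and H be simple graphs on Fin n. Then G and H are isomorphic as graphs if and only if there exists a bijective linear operator (linear equivalence) T on (Fin (n-1) → ZMod 2) over ZMod 2 such that the image of C(n-1) under T is exactly C(n-1) and the image of β(G) under T is exactly β(H). -/

import Mathlib

/-- The coding vector of an unordered pair of vertices of `Fin n`:
for `e = {i,j}` with `i < j`, coordinate `k` is `1` iff `i ≤ k < j`. -/
def chi (n : ℕ) : Sym2 (Fin n) → (Fin (n - 1) → ZMod 2) :=
  Sym2.lift ⟨fun i j k => if min i.val j.val ≤ k.val ∧ k.val < max i.val j.val then 1 else 0,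
    fun i j => by funext k; dsimp only; rw [min_comm, max_comm]⟩

/-- `Cseg N` is the set of nonzero vectors of `Fin N → ZMod 2` whose support is an
interval of consecutive indices (the consecutive 1's property). -/
def Cseg (N : ℕ) : Set (Fin N → ZMod 2) :=
  {v | v ≠ 0 ∧ ∃ a b : ℕ, ∀ k : Fin N, v k = 1 ↔ a ≤ k.val ∧ k.val < b}

/-- A finite set of vectors is reduced if it is nonempty and every nonempty proper
subset has nonzero sum. -/
def IsReducedSet {N : ℕ} (S : Finset (Fin N → ZMod 2)) : Prop :=
  S.Nonempty ∧ ∀ A : Finset (Fin N → ZMod 2), A ⊂ S → A.Nonempty → ∑ v ∈ A, v ≠ 0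

/-!
The prefix vectors of the vertices form an affine basis `b` of `Fin (n - 1) → ZMod 2`, and the
coding vector of `{i, j}` is the difference `b i - b j`. So a bijection of vertices extends to a
linear map of coding vectors. Conversely, let a linear equivalence `T` permute the coding vectors,
and fix a vertex `o`. Any two of the vectors `T (b i - b o)` with `i ≠ o` differ by a coding vector,
so the pairs they encode intersect pairwise; such a family of pairs has a common vertex or contains
a triangle. The vectors of a triangle sum to zero, whereas the vectors `b i - b o` with `i ≠ o` are
linearly independent. Hence there is a common vertex `u`, and the other endpoints define the
bijection.
-/

open Set

theorem exists_common_mem_or_triangle {α : Type*} [Nonempty α] {S : Set (Sym2 α)}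
    (hS : S.Pairwise fun e f ↦ ∃ v ∈ e, v ∈ f) :
    (∃ u, ∀ e ∈ S, u ∈ e) ∨
      ∃ u v w, u ≠ v ∧ u ≠ w ∧ v ≠ w ∧ s(u, v) ∈ S ∧ s(u, w) ∈ S ∧ s(v, w) ∈ S := by
  by_contra! ⟨hcommon, htriangle⟩
  obtain ⟨e, he, -⟩ := hcommon (Classical.arbitrary α)
  induction e with | _ u v
  obtain ⟨f, hf, huf⟩ := hcommon u
  obtain ⟨g, hg, hvg⟩ := hcommon v
  have hvf : v ∈ f := by
    obtain ⟨x, hx, hxf⟩ := hS he hf (by rintro rfl; simp at huf)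
    grind
  have hug : u ∈ g := by
    obtain ⟨x, hx, hxg⟩ := hS he hg (by rintro rfl; simp at hvg)
    grind
  obtain ⟨w, rfl⟩ := Sym2.mem_iff_exists.1 hvf
  have hwg : w ∈ g := by
    obtain ⟨x, hx, hxg⟩ := hS hf hg (by rintro rfl; exact huf hug)
    grind
  have huw : u ≠ w := by rintro rfl; simp at huf
  obtain rfl : g = s(u, w) := (Sym2.mem_and_mem_iff huw).1 ⟨hug, hwg⟩
  have huv : u ≠ v := by rintro rfl; exact hvg hug
  have hvw : v ≠ w := by rintro rfl; exact hvg hwg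
  exact htriangle u v w huv huw hvw he hg hf

theorem image_edgeSet_eq_iff {ι κ : Type*} {G : SimpleGraph ι} {H : SimpleGraph κ}
    (σ : ι ≃ κ) : Sym2.map σ '' G.edgeSet = H.edgeSet ↔ ∀ i j, H.Adj (σ i) (σ j) ↔ G.Adj i j := by
  rw [Set.ext_iff, Sym2.forall, σ.surjective.forall₂]
  refine forall₂_congr fun i j ↦ ?_
  rw [← Sym2.map_mk, (Sym2.map.injective σ.injective).mem_set_image, Sym2.map_mk,
    SimpleGraph.mem_edgeSet, SimpleGraph.mem_edgeSet]
  exact iff_comm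

theorem vsub_comm_of_charTwo (k : Type*) {V P : Type*} [Ring k] [CharP k 2] [AddCommGroup V]
    [Module k V] [AddTorsor V P] (p q : P) : p -ᵥ q = q -ᵥ p := by
  rw [← neg_vsub_eq_vsub_rev, ← neg_one_smul k, CharTwo.neg_eq, one_smul]

section PairVector

variable {ι κ k V W P Q : Type*} [Ring k] [CharP k 2]
variable [AddCommGroup V] [Module k V] [AddTorsor V P]
variable [AddCommGroup W] [Module k W] [AddTorsor W Q]

/-- The coding vector of an unordered pair of indices of an affine basis: the difference of the two
basis points. The scalars have characteristic two so that the order of the points is immaterial. -/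
def pairVector (b : AffineBasis ι k P) : Sym2 ι → V :=
  Sym2.lift ⟨fun i j ↦ b i -ᵥ b j, fun i j ↦ vsub_comm_of_charTwo k (b i) (b j)⟩

variable (b : AffineBasis ι k P) (c : AffineBasis κ k Q)

@[simp]
theorem pairVector_mk (i j : ι) : pairVector b s(i, j) = b i -ᵥ b j := rfl

@[simp]
theorem pairVector_eq_zero_iff {e : Sym2 ι} : pairVector b e = 0 ↔ e.IsDiag := by
  have : Nontrivial k := CharP.nontrivial_of_char_ne_one (v := 2) (by decide)
  induction e with | _ i j
  rw [pairVector_mk, vsub_eq_zero_iff_eq, b.ind.injective.eq_iff, Sym2.mk_isDiag_iff]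

theorem coord_linear_pairVector_ne_zero_iff {e : Sym2 ι} (he : ¬e.IsDiag) {l : ι} :
    (b.coord l).linear (pairVector b e) ≠ 0 ↔ l ∈ e := by
  classical
  have : Nontrivial k := CharP.nontrivial_of_char_ne_one (v := 2) (by decide)
  induction e with | _ i j
  rw [Sym2.mk_isDiag_iff] at he
  rw [pairVector_mk, AffineMap.linearMap_vsub, vsub_eq_sub, b.coord_apply, b.coord_apply,
    Sym2.mem_iff]
  rcases eq_or_ne l i with rfl | hi
  · simp [he]
  · simp [hi]

theorem mem_of_pairVector_sub_eq {e f g : Sym2 ι} (he : ¬e.IsDiag) (hf : ¬f.IsDiag)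
    (hg : ¬g.IsDiag) (h : pairVector b e - pairVector b f = pairVector b g) {l : ι} (hle : l ∈ e)
    (hlf : l ∉ f) : l ∈ g := by
  have hlf₀ : (b.coord l).linear (pairVector b f) = 0 := by
    rwa [← coord_linear_pairVector_ne_zero_iff b hf, not_not] at hlf
  rwa [← coord_linear_pairVector_ne_zero_iff b hg, ← h, map_sub, hlf₀, sub_zero,
    coord_linear_pairVector_ne_zero_iff b he]

theorem exists_mem_mem_of_pairVector_sub_eq {e f g : Sym2 ι} (he : ¬e.IsDiag) (hf : ¬f.IsDiag)
    (hg : ¬g.IsDiag) (h : pairVector b e - pairVector b f = pairVector b g) :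
    ∃ l ∈ e, l ∈ f := by
  by_contra! hdisj
  have hsub : ∀ l ∈ e, l ∈ g := fun l hl ↦
    mem_of_pairVector_sub_eq b he hf hg h hl (hdisj l hl)
  have heg : g = e := by
    induction e with | _ i j
    exact (Sym2.mem_and_mem_iff he).1
      ⟨hsub i (Sym2.mem_mk_left i j), hsub j (Sym2.mem_mk_right i j)⟩
  rw [heg, sub_eq_self, pairVector_eq_zero_iff] at h
  exact hf h

theorem pairVector_injOn : InjOn (pairVector b) Sym2.diagSetᶜ := by
  intro e he f hf h
  ext l
  rw [← coord_linear_pairVector_ne_zero_iff b he, h, coord_linear_pairVector_ne_zero_iff b hf]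

theorem exists_linearEquiv_apply_pairVector_eq_map (σ : ι ≃ κ) :
    ∃ T : V ≃ₗ[k] W, ∀ e, T (pairVector b e) = pairVector c (e.map σ) := by
  obtain ⟨o⟩ := b.nonempty
  let T : V ≃ₗ[k] W := (b.basisOf o).equiv (c.basisOf (σ o))
    (σ.subtypeEquiv fun _ ↦ σ.injective.ne_iff.symm)
  have hT (i : ι) : T (b i -ᵥ b o) = c (σ i) -ᵥ c (σ o) := by
    rcases eq_or_ne i o with rfl | hi
    · simp
    · have h := (b.basisOf o).equiv_apply ⟨i, hi⟩ (c.basisOf (σ o))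
        (σ.subtypeEquiv fun _ ↦ σ.injective.ne_iff.symm)
      rwa [b.basisOf_apply, c.basisOf_apply] at h
  refine ⟨T, Sym2.ind fun i j ↦ ?_⟩
  rw [Sym2.map_mk, pairVector_mk, pairVector_mk, ← vsub_sub_vsub_cancel_right (b i) (b j) (b o),
    map_sub, hT, hT, vsub_sub_vsub_cancel_right]

variable {b c}

theorem isDiag_iff_of_apply_pairVector_eq {T : V →ₗ[k] W} (hT : Function.Injective T) {e : Sym2 ι}
    {f : Sym2 κ} (h : T (pairVector b e) = pairVector c f) : e.IsDiag ↔ f.IsDiag := by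
  rw [← pairVector_eq_zero_iff b, ← pairVector_eq_zero_iff c, ← h, map_eq_zero_iff T hT]

theorem apply_pairVector_ne_of_injective {T : V →ₗ[k] W} (hT : Function.Injective T)
    {o i₁ i₂ i₃ : ι} {u v w : κ} (huv : u ≠ v) (huw : u ≠ w) (hvw : v ≠ w)
    (h₁ : T (pairVector b s(i₁, o)) = pairVector c s(u, v))
    (h₂ : T (pairVector b s(i₂, o)) = pairVector c s(u, w)) :
    T (pairVector b s(i₃, o)) ≠ pairVector c s(v, w) := by
  intro h₃
  have h₁₂ : T (pairVector b s(i₁, i₂)) = pairVector c s(v, w) := by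
    rw [Sym2.eq_swap (a := v), pairVector_mk, ← vsub_sub_vsub_cancel_right (b i₁) (b i₂) (b o),
      map_sub, ← pairVector_mk, ← pairVector_mk, h₁, h₂]
    exact vsub_sub_vsub_cancel_left _ _ _
  have heq : s(i₁, i₂) = s(i₃, o) := pairVector_injOn b
    ((isDiag_iff_of_apply_pairVector_eq hT h₁₂).not.2 hvw)
    ((isDiag_iff_of_apply_pairVector_eq hT h₃).not.2 hvw) (hT (h₁₂.trans h₃.symm))
  obtain rfl | rfl : o = i₁ ∨ o = i₂ := Sym2.mem_iff.1 (heq ▸ Sym2.mem_mk_right i₃ o)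
  · exact huv ((isDiag_iff_of_apply_pairVector_eq hT h₁).1 rfl)
  · exact huw ((isDiag_iff_of_apply_pairVector_eq hT h₂).1 rfl)

theorem exists_pairVector_eq_apply_of_mapsTo {T : V →ₗ[k] W}
    (hT : MapsTo T (pairVector b '' Sym2.diagSetᶜ) (pairVector c '' Sym2.diagSetᶜ)) {i j : ι}
    (hij : i ≠ j) : ∃ e, ¬e.IsDiag ∧ pairVector c e = T (pairVector b s(i, j)) :=
  hT (mem_image_of_mem (pairVector b) (x := s(i, j)) hij)

theorem pairwise_exists_mem_mem_of_mapsTo {T : V →ₗ[k] W}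
    (hT : MapsTo T (pairVector b '' Sym2.diagSetᶜ) (pairVector c '' Sym2.diagSetᶜ)) (o : ι) :
    {e | ¬e.IsDiag ∧ ∃ i, T (pairVector b s(i, o)) = pairVector c e}.Pairwise
      fun e f ↦ ∃ v ∈ e, v ∈ f := by
  rintro e ⟨he, i, hi⟩ f ⟨hf, j, hj⟩ hef
  have hij : i ≠ j := by
    rintro rfl
    exact hef (pairVector_injOn c he hf (hi.symm.trans hj))
  obtain ⟨g, hg, hgij⟩ := exists_pairVector_eq_apply_of_mapsTo hT hij
  refine exists_mem_mem_of_pairVector_sub_eq c he hf hg ?_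
  rw [← hi, ← hj, hgij, ← map_sub]
  exact congrArg T (vsub_sub_vsub_cancel_right _ _ _)

theorem exists_apply_pairVector_eq_map {T : V →ₗ[k] W} (hT : Function.Injective T)
    (hmaps : MapsTo T (pairVector b '' Sym2.diagSetᶜ) (pairVector c '' Sym2.diagSetᶜ)) :
    ∃ s : ι → κ, ∀ e, T (pairVector b e) = pairVector c (e.map s) := by
  obtain ⟨o⟩ := b.nonempty
  have := c.nonempty
  obtain ⟨u, hu⟩ | ⟨u, v, w, huv, huw, hvw, ⟨-, i₁, h₁⟩, ⟨-, i₂, h₂⟩, ⟨-, i₃, h₃⟩⟩ :=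
    exists_common_mem_or_triangle (pairwise_exists_mem_mem_of_mapsTo hmaps o)
  · have hstar (i : ι) : ∃ j, T (b i -ᵥ b o) = c j -ᵥ c u := by
      rcases eq_or_ne i o with rfl | hio
      · exact ⟨u, by rw [vsub_self, vsub_self, map_zero]⟩
      · obtain ⟨e, he, hei⟩ := exists_pairVector_eq_apply_of_mapsTo hmaps hio
        obtain ⟨j, rfl⟩ := Sym2.mem_iff_exists.1 (hu e ⟨he, i, hei.symm⟩)
        exact ⟨j, by rw [← pairVector_mk, ← hei, Sym2.eq_swap, pairVector_mk]⟩
    choose s hs using hstar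
    refine ⟨s, Sym2.ind fun i j ↦ ?_⟩
    rw [Sym2.map_mk, pairVector_mk, pairVector_mk, ← vsub_sub_vsub_cancel_right (b i) (b j) (b o),
      map_sub, hs, hs, vsub_sub_vsub_cancel_right]
  · exact absurd h₃ (apply_pairVector_ne_of_injective hT huv huw hvw h₁ h₂)

theorem exists_equiv_apply_pairVector_eq_map {T : V ≃ₗ[k] W}
    (hT : T '' (pairVector b '' Sym2.diagSetᶜ) = pairVector c '' Sym2.diagSetᶜ) :
    ∃ σ : ι ≃ κ, ∀ e, T (pairVector b e) = pairVector c (e.map σ) := by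
  obtain ⟨s, hs⟩ : ∃ s : ι → κ, ∀ e, T (pairVector b e) = pairVector c (e.map s) :=
    exists_apply_pairVector_eq_map (T := T.toLinearMap) T.injective
      (mapsTo_iff_image_subset.2 hT.subset)
  have hinj : Function.Injective s := by
    intro i j hij
    exact (isDiag_iff_of_apply_pairVector_eq (T := T.toLinearMap) T.injective (hs s(i, j))).2 hij
  have hsurj : Function.Surjective s := by
    intro y
    obtain ⟨o⟩ := b.nonempty
    by_cases hy : s o = y
    · exact ⟨o, hy⟩
    · obtain ⟨_, ⟨e, he, rfl⟩, hey⟩ := hT.superset (mem_image_of_mem _ (x := s(s o, y)) hy)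
      have heq : e.map s = s(s o, y) :=
        pairVector_injOn c ((Sym2.isDiag_map hinj).not.2 he) hy ((hs e).symm.trans hey)
      obtain ⟨i, -, hi⟩ := Sym2.mem_map.1 (heq ▸ Sym2.mem_mk_right (s o) y)
      exact ⟨i, hi⟩
  exact ⟨Equiv.ofBijective s ⟨hinj, hsurj⟩, hs⟩

theorem image_pairVector_image_eq_iff {T : V ≃ₗ[k] W} {σ : ι ≃ κ}
    (hT : ∀ e, T (pairVector b e) = pairVector c (e.map σ)) (G : SimpleGraph ι)
    (H : SimpleGraph κ) :
    T '' (pairVector b '' G.edgeSet) = pairVector c '' H.edgeSet ↔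
      ∀ i j, H.Adj (σ i) (σ j) ↔ G.Adj i j := by
  have hG : Sym2.map σ '' G.edgeSet ⊆ Sym2.diagSetᶜ := by
    rintro _ ⟨e, he, rfl⟩
    exact (Sym2.isDiag_map σ.injective).not.2 (G.not_isDiag_of_mem_edgeSet he)
  have hH : H.edgeSet ⊆ Sym2.diagSetᶜ := fun _ ↦ H.not_isDiag_of_mem_edgeSet
  rw [image_comm hT, (pairVector_injOn c).image_eq_image_iff hG hH, image_edgeSet_eq_iff]

theorem stmt19_general (b : AffineBasis ι k P) (c : AffineBasis κ k Q) (G : SimpleGraph ι)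
    (H : SimpleGraph κ) :
    Nonempty (G ≃g H) ↔
      ∃ T : V ≃ₗ[k] W,
        T '' (pairVector b '' Sym2.diagSetᶜ) = pairVector c '' Sym2.diagSetᶜ ∧
          T '' (pairVector b '' G.edgeSet) = pairVector c '' H.edgeSet := by
  constructor
  · rintro ⟨φ⟩
    obtain ⟨T, hT⟩ := exists_linearEquiv_apply_pairVector_eq_map b c φ.toEquiv
    refine ⟨T, ?_, (image_pairVector_image_eq_iff hT G H).2 fun _ _ ↦ φ.map_adj_iff⟩
    simpa only [SimpleGraph.edgeSet_top] using
      (image_pairVector_image_eq_iff hT ⊤ ⊤).2 fun _ _ ↦ φ.injective.ne_iff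
  · rintro ⟨T, hpairs, hedges⟩
    obtain ⟨σ, hσ⟩ := exists_equiv_apply_pairVector_eq_map hpairs
    exact ⟨σ, (image_pairVector_image_eq_iff hσ G H).1 hedges _ _⟩

end PairVector

section Prefix

variable (K : Type*) {n : ℕ}

/-- The prefix vector of the vertex `i`: its first `i` coordinates are `1`, the others `0`. -/
def prefixVector [Zero K] [One K] (i : Fin n) : Fin (n - 1) → K :=
  fun l ↦ if l.val < i.val then 1 else 0

theorem prefixVector_succ_sub_prefixVector [Ring K] (l : Fin (n - 1)) :
    prefixVector K ⟨l + 1, by omega⟩ - prefixVector K (n := n) ⟨l, by omega⟩ = Pi.single l 1 := by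
  ext j
  simp only [prefixVector, Pi.sub_apply, Pi.single_apply, Fin.ext_iff]
  split_ifs <;> first | omega | simp

theorem vectorSpan_range_prefixVector [Ring K] :
    vectorSpan K (range (prefixVector K (n := n))) = ⊤ := by
  rw [eq_top_iff, ← (Pi.basisFun K (Fin (n - 1))).span_eq, Submodule.span_le]
  rintro _ ⟨l, rfl⟩
  rw [Pi.basisFun_apply, ← prefixVector_succ_sub_prefixVector]
  exact vsub_mem_vectorSpan K (mem_range_self _) (mem_range_self _)

variable (n) in
/-- The affine basis of `Fin (n - 1) → K` formed by the prefix vectors of the `n` vertices. -/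
def prefixBasis [DivisionRing K] [NeZero n] : AffineBasis (Fin n) K (Fin (n - 1) → K) where
  toFun := prefixVector K
  ind' := by
    have hcard : Fintype.card (Fin n) = n - 1 + 1 := by
      rw [Fintype.card_fin, Nat.sub_add_cancel NeZero.one_le]
    rw [affineIndependent_iff_finrank_vectorSpan_eq K _ hcard, vectorSpan_range_prefixVector,
      finrank_top, Module.finrank_fin_fun]
  tot' := by
    rw [AffineSubspace.affineSpan_eq_top_iff_vectorSpan_eq_top_of_nonempty _ _ _
      (range_nonempty _), vectorSpan_range_prefixVector]

end Prefix

theorem pairVector_prefixBasis (n : ℕ) [NeZero n] :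
    pairVector (prefixBasis (ZMod 2) n) = chi n := by
  ext e l
  induction e with | _ i j
  change prefixVector (ZMod 2) i l - prefixVector (ZMod 2) j l = chi n s(i, j) l
  simp only [prefixVector, chi, Sym2.lift_mk]
  split_ifs <;> first | omega | decide

theorem chi_apply_eq_one_iff {n : ℕ} (i j : Fin n) (l : Fin (n - 1)) :
    chi n s(i, j) l = 1 ↔ min i.val j.val ≤ l.val ∧ l.val < max i.val j.val := by
  simp only [chi, Sym2.lift_mk, ite_eq_left_iff, zero_ne_one, imp_false, not_not]

theorem chi_mem_Cseg {n : ℕ} {e : Sym2 (Fin n)} (he : ¬e.IsDiag) : chi n e ∈ Cseg (n - 1) := by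
  induction e with | _ i j
  have hij : i.val ≠ j.val := Fin.val_ne_of_ne he
  refine ⟨fun h ↦ ?_, min i.val j.val, max i.val j.val, chi_apply_eq_one_iff i j⟩
  have hmin : chi n s(i, j) ⟨min i.val j.val, by omega⟩ = 1 :=
    (chi_apply_eq_one_iff i j _).2 ⟨le_rfl, min_lt_max.2 hij⟩
  rw [h] at hmin
  exact zero_ne_one hmin

theorem exists_chi_eq_of_mem_Cseg {n : ℕ} {v : Fin (n - 1) → ZMod 2} (hv : v ∈ Cseg (n - 1)) :
    ∃ e : Sym2 (Fin n), ¬e.IsDiag ∧ chi n e = v := by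
  obtain ⟨hv₀, i, j, hij⟩ := hv
  obtain ⟨l, hl⟩ := Function.ne_iff.1 hv₀
  have hlij : i ≤ l.val ∧ l.val < j := (hij l).1 (Fin.eq_one_of_ne_zero _ hl)
  -- The bound `j` in `Cseg` may exceed `n - 1`, so it is truncated to a vertex.
  refine ⟨s(⟨i, by omega⟩, ⟨min j (n - 1), by omega⟩), ?_, ?_⟩
  · rw [Sym2.mk_isDiag_iff, Fin.mk.injEq]
    omega
  · have eq_of_eq_one_iff : ∀ x y : ZMod 2, (x = 1 ↔ y = 1) → x = y := by decide
    ext m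
    apply eq_of_eq_one_iff
    rw [chi_apply_eq_one_iff, hij]
    dsimp only
    omega

theorem image_chi_compl_diagSet (n : ℕ) : chi n '' Sym2.diagSetᶜ = Cseg (n - 1) :=
  Subset.antisymm (image_subset_iff.2 fun _ ↦ chi_mem_Cseg) fun _ ↦ exists_chi_eq_of_mem_Cseg

theorem stmt19 (n : ℕ) (hn : 2 ≤ n) (G H : SimpleGraph (Fin n)) :
    Nonempty (G ≃g H) ↔
      ∃ T : (Fin (n - 1) → ZMod 2) ≃ₗ[ZMod 2] (Fin (n - 1) → ZMod 2),
        ⇑T '' Cseg (n - 1) = Cseg (n - 1) ∧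
          ⇑T '' (chi n '' G.edgeSet) = chi n '' H.edgeSet := by
  have : NeZero n := ⟨by omega⟩
  simpa only [pairVector_prefixBasis, image_chi_compl_diagSet] using
    stmt19_general (prefixBasis (ZMod 2) n) (prefixBasis (ZMod 2) n) G H
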